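/- Let n_2/n_1 be a rational number with n_1, n_2 coprime positive integers, n_2 < n_1, n_1 > 1, with finite continued fraction expansion [a_0; a_1, …, a_L], let K be a positive integer, and let r_0 ≠ n_2/n_1 be a real number with continued fraction expansion [b_0; b_1, …]. If |r_0 − n_2/n_1| < 1/((2K+2) n_1 (n_1 − 1)), then one of the following holds: (i) b_i = a_i for all i = 0, 1, …, L, and b_{L+1} ≥ K; or (ii) b_i = a_i for i = 0, 1, …, L−1, b_L = a_L − 1, b_{L+1} = 1, and b_{L+2} ≥ K. -/

import Mathlib

/-!
The hypothesis is inherited by the Gauss map `y ↦ fract y⁻¹`.  Since `r` is close to `n₂ / n₁`,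
one has `r (n₁ - 1) > n₂ - 1`, and
`|r⁻¹ - n₁ / n₂| = |r - n₂ / n₁| · n₁ / (r n₂)`.
So if `n₂ > 1` this quantity is less than `1 / ((2K + 2) n₂ (n₂ - 1)) ≤ 1 / (4 n₂)`.  As `n₁ / n₂`
has distance at least `1 / n₂` from the integers, `r⁻¹` and `n₁ / n₂` have the same integer part
`a`, and the pair `(r⁻¹ - a, (n₁ - a n₂) / n₂)` satisfies the same hypotheses with one partial
quotient fewer (`gauss_step`).  Induction on `L` reduces everything to `n₂ = 1`.  There
`r⁻¹ = n₁ ± ε` with `ε⁻¹ > K + 1 ∓ 1 / n₁`; the plus sign gives the first alternative directly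
(`base_below`), and the minus sign gives the second one through
`n₁ - ε = [n₁ - 1; 1, ε⁻¹ - 1]` (`base_above`).
-/

/-- The remainders `r_0, r_1, r_2, …` of the continued fraction algorithm
applied to a real number `r`: `r_0 = r - ⌊r⌋` and `r_{i+1} = 1/r_i - ⌊1/r_i⌋`. -/
noncomputable def cfRem (r : ℝ) : ℕ → ℝ
  | 0 => Int.fract r
  | i + 1 => Int.fract (cfRem r i)⁻¹

/-- The partial quotients `b_0, b_1, b_2, …` of the continued fraction
expansion of a real number `r`: `b_0 = ⌊r⌋` and `b_{i+1} = ⌊1/r_i⌋`. -/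
noncomputable def cfB (r : ℝ) : ℕ → ℤ
  | 0 => ⌊r⌋
  | i + 1 => ⌊(cfRem r i)⁻¹⌋

theorem cfRem_succ_eq_sub_int {r : ℝ} (h0 : 0 < r) (h1 : r < 1) (m : ℤ) (i : ℕ) :
    cfRem r (i + 1) = cfRem (r⁻¹ - m) i := by
  induction i with
  | zero =>
    have hf : Int.fract r = r := Int.fract_eq_self.2 ⟨h0.le, h1⟩
    simp [cfRem, hf]
  | succ i ih => rw [cfRem, ih, cfRem]

theorem cfB_succ_succ_eq_sub_int {r : ℝ} (h0 : 0 < r) (h1 : r < 1) (m : ℤ) (i : ℕ) :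
    cfB r (i + 2) = cfB (r⁻¹ - m) (i + 1) := by
  rw [cfB, cfB, cfRem_succ_eq_sub_int h0 h1 m]

theorem cfB_zero_of_mem {r : ℝ} (h0 : 0 < r) (h1 : r < 1) : cfB r 0 = 0 :=
  Int.floor_eq_zero_iff.2 ⟨h0.le, h1⟩

theorem cfB_one_of_mem {r : ℝ} (h0 : 0 < r) (h1 : r < 1) : cfB r 1 = ⌊r⁻¹⌋ := by
  have hf : Int.fract r = r := Int.fract_eq_self.2 ⟨h0.le, h1⟩
  simp [cfB, cfRem, hf]

/-- The closeness hypothesis with denominators cleared; it keeps `r` inside `(0, 1)`. -/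
theorem cleared_bound {N M K r : ℝ} (hN : 2 ≤ N) (hM : 1 ≤ M) (hMN : M + 1 ≤ N) (hK : 1 ≤ K)
    (hr : |r - M / N| < 1 / ((2 * K + 2) * N * (N - 1))) :
    |r * N - M| * ((2 * K + 2) * (N - 1)) < 1 ∧ 0 < r ∧ r < 1 ∧ M - 1 < r * (N - 1) := by
  have hN0 : 0 < N := by linarith
  have hN1 : 0 < N - 1 := by linarith
  have hD : 0 < (2 * K + 2) * (N - 1) := by positivity
  have e : r * N - M = (r - M / N) * N := by field_simp
  have hb : |r * N - M| * ((2 * K + 2) * (N - 1)) < 1 := by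
    rw [e, abs_mul, abs_of_pos hN0]
    rw [lt_div_iff₀ (by positivity)] at hr
    linarith
  have hq : |r * N - M| * 4 * (N - 1) < 1 := by
    have : |r * N - M| * (4 * (N - 1)) ≤ |r * N - M| * ((2 * K + 2) * (N - 1)) := by
      gcongr; linarith
    linarith
  have h4 : |r * N - M| < 1 / 4 := by nlinarith [abs_nonneg (r * N - M)]
  obtain ⟨hl, hu⟩ := abs_lt.1 h4
  have hr0 : 0 < r := by
    by_contra h
    nlinarith
  have hr1 : r < 1 := by
    by_contra h
    nlinarith
  refine ⟨hb, hr0, hr1, ?_⟩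
  have hgap : 0 < N * (1 - |r * N - M| - r) := by nlinarith [le_abs_self (r * N - M)]
  have := pos_of_mul_pos_right hgap hN0.le
  linarith [neg_abs_le (r * N - M)]

/-- One step of the Gauss map when `n₂ > 1`, with `n₁ = a n₂ + n₃`: the integer parts of `r⁻¹` and
`n₁ / n₂` agree and the closeness hypothesis passes to the fractional parts. -/
theorem gauss_step {N M R K r : ℝ} {a : ℤ} (hM : 2 ≤ M) (hMN : M + 1 ≤ N)
    (hK : 1 ≤ K) (hN : N = M * a + R) (hR0 : 1 ≤ R) (hRM : R + 1 ≤ M)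
    (hr : |r - M / N| < 1 / ((2 * K + 2) * N * (N - 1))) :
    ⌊r⁻¹⌋ = a ∧ |r⁻¹ - a - R / M| < 1 / ((2 * K + 2) * M * (M - 1)) := by
  obtain ⟨hb, hr0, hr1, hrM⟩ := cleared_bound (by linarith) (by linarith) hMN hK hr
  have hM0 : 0 < M := by linarith
  have hM1 : 0 < M - 1 := by linarith
  have hK0 : 0 < 2 * K + 2 := by linarith
  have e : r⁻¹ - a - R / M = -(r * N - M) / (r * M) := by
    rw [hN]; field_simp; ring
  have hclose : |r⁻¹ - a - R / M| < 1 / ((2 * K + 2) * M * (M - 1)) := by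
    rw [e, abs_div, abs_neg, abs_of_pos (mul_pos hr0 hM0), div_lt_div_iff₀ (by positivity)
      (by positivity)]
    have h1 : |r * N - M| * ((2 * K + 2) * (M - 1)) ≤
        |r * N - M| * ((2 * K + 2) * (r * (N - 1))) := by gcongr
    have h2 : |r * N - M| * ((2 * K + 2) * (N - 1)) * r < 1 * r := by gcongr
    have h3 : |r * N - M| * ((2 * K + 2) * (M - 1)) < r := by linarith
    have := mul_lt_mul_of_pos_right h3 hM0
    linarith
  refine ⟨?_, hclose⟩
  have hsm : 1 / ((2 * K + 2) * M * (M - 1)) ≤ 1 / M := by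
    apply one_div_le_one_div_of_le hM0
    nlinarith [mul_nonneg hM0.le hM1.le, mul_nonneg (mul_nonneg hM0.le hM1.le) hK0.le,
      mul_pos hM0 hM1]
  obtain ⟨hl, hu⟩ := abs_lt.1 (hclose.trans_le hsm)
  have h1 : 1 / M ≤ R / M := by gcongr
  have h2 : R / M + 1 / M ≤ 1 := by rw [← add_div, div_le_one hM0]; exact hRM
  rw [Int.floor_eq_iff]
  constructor <;> linarith

/-- `n₂ = 1` and `r < 1 / n₁`: then `r⁻¹ = n₁ + ε` with `ε⁻¹ > K`. -/
theorem base_below {n K : ℤ} {r : ℝ} (hn : 2 ≤ n) (hK : 1 ≤ K) (hlt : r < 1 / (n : ℝ))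
    (hr : |r - 1 / (n : ℝ)| < 1 / ((2 * (K : ℝ) + 2) * n * ((n : ℝ) - 1))) :
    ⌊r⁻¹⌋ = n ∧ K ≤ cfB r 2 := by
  have hN : (2 : ℝ) ≤ n := by exact_mod_cast hn
  have hK' : (1 : ℝ) ≤ K := by exact_mod_cast hK
  obtain ⟨hb, hr0, hr1, -⟩ := cleared_bound hN le_rfl (by linarith) hK' hr
  have hd : 0 < 1 - r * n := by
    rw [lt_div_iff₀ (by linarith)] at hlt
    linarith
  rw [abs_sub_comm, abs_of_pos hd] at hb
  have e : r⁻¹ - n = (1 - r * n) / r := by field_simp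
  have hKr : (1 - r * n) * K < r := by
    by_contra h
    push Not at h
    have hp := mul_pos hd (show (0 : ℝ) < n by linarith)
    nlinarith [mul_nonneg hd.le (show (0 : ℝ) ≤ n - 2 by linarith),
      mul_le_mul_of_nonneg_right h (show (0 : ℝ) ≤ n by linarith),
      mul_nonneg (mul_nonneg hd.le (show (0 : ℝ) ≤ n - 2 by linarith))
        (show (0 : ℝ) ≤ K by linarith)]
  have hf : ⌊r⁻¹⌋ = n := by
    rw [Int.floor_eq_iff]
    have h1 : 0 < r⁻¹ - n := by rw [e]; positivity
    have h2 : r⁻¹ - n < 1 := by rw [e, div_lt_one hr0]; nlinarith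
    constructor <;> linarith
  refine ⟨hf, ?_⟩
  rw [cfB, cfRem_succ_eq_sub_int hr0 hr1 n, cfRem, e, Int.fract_eq_self.2, inv_div, Int.le_floor,
    le_div_iff₀ hd]
  · linarith
  · exact ⟨by positivity, by rw [div_lt_one hr0]; nlinarith⟩

/-- `n₂ = 1` and `r > 1 / n₁`: then `r⁻¹ = n₁ - ε` with `ε⁻¹ > K + 1`, and
`n₁ - ε = [n₁ - 1; 1, ε⁻¹ - 1]`. -/
theorem base_above {n K : ℤ} {r : ℝ} (hn : 2 ≤ n) (hK : 1 ≤ K) (hlt : 1 / (n : ℝ) < r)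
    (hr : |r - 1 / (n : ℝ)| < 1 / ((2 * (K : ℝ) + 2) * n * ((n : ℝ) - 1))) :
    ⌊r⁻¹⌋ = n - 1 ∧ cfB r 2 = 1 ∧ K ≤ cfB r 3 := by
  have hN : (2 : ℝ) ≤ n := by exact_mod_cast hn
  have hK' : (1 : ℝ) ≤ K := by exact_mod_cast hK
  obtain ⟨hb, hr0, hr1, -⟩ := cleared_bound hN le_rfl (by linarith) hK' hr
  have hd : 0 < r * n - 1 := by
    rw [div_lt_iff₀ (by linarith)] at hlt
    linarith
  rw [abs_of_pos hd] at hb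
  set d := r * n - 1 with hdd
  have e : r⁻¹ - ((n - 1 : ℤ) : ℝ) = (r - d) / r := by
    push_cast; rw [hdd]; field_simp; ring
  have hKr : d * (K + 1) < r := by
    by_contra h
    push Not at h
    have hp := mul_pos hd (show (0 : ℝ) < n by linarith)
    nlinarith [mul_nonneg hd.le (show (0 : ℝ) ≤ n - 2 by linarith),
      mul_le_mul_of_nonneg_right h (show (0 : ℝ) ≤ n by linarith),
      mul_nonneg (mul_nonneg hd.le (show (0 : ℝ) ≤ n - 2 by linarith))
        (show (0 : ℝ) ≤ K by linarith)]
  have hd2 : 2 * d < r := by nlinarith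
  have hrd : 0 < r - d := by linarith
  have hlt1 : (r - d) / r < 1 := by rw [div_lt_one hr0]; linarith
  have hf : ⌊r⁻¹⌋ = n - 1 := by
    rw [Int.floor_eq_iff]
    have h1 : 0 < r⁻¹ - ((n - 1 : ℤ) : ℝ) := by rw [e]; positivity
    constructor <;> linarith
  have hrem1 : cfRem r 1 = (r - d) / r := by
    rw [cfRem_succ_eq_sub_int hr0 hr1 (n - 1), cfRem, e, Int.fract_eq_self.2 ⟨by positivity, hlt1⟩]
  have hB2 : ⌊(cfRem r 1)⁻¹⌋ = 1 := by
    rw [hrem1, inv_div, Int.floor_eq_iff]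
    push_cast
    constructor
    · rw [le_div_iff₀ hrd]; linarith
    · rw [div_lt_iff₀ hrd]; linarith
  have hrem2 : cfRem r 2 = d / (r - d) := by
    rw [cfRem, Int.fract, hB2, hrem1]
    push_cast
    field_simp
    ring
  refine ⟨hf, hB2, ?_⟩
  rw [cfB, hrem2, inv_div, Int.le_floor, le_div_iff₀ hd]
  linarith

/-- Theorem 6: let `n₂/n₁` be a rational number with `n₁, n₂` coprime positive
integers, `n₂ < n₁`, `n₁ > 1`, whose (finite) continued fraction expansion is
`[a 0; a 1, …, a L]`, let `K` be a positive integer, and let `r ≠ n₂/n₁` be a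
real number with continued fraction expansion `[b 0; b 1, …]`.  If
`|r − n₂/n₁| < 1/((2K+2) n₁ (n₁ − 1))`, then either `b i = a i` for all
`i ≤ L` and `b (L+1) ≥ K`, or `b i = a i` for `i < L`, `b L = a L − 1`,
`b (L+1) = 1` and `b (L+2) ≥ K`. -/
theorem stmt_6 (n₁ n₂ : ℤ) (hn1 : 1 < n₁) (hn2 : 0 < n₂) (h21 : n₂ < n₁)
    (hcop : Int.gcd n₂ n₁ = 1) (K : ℤ) (hK : 0 < K) (L : ℕ)
    (hterm : cfRem ((n₂ : ℝ) / (n₁ : ℝ)) L = 0)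
    (hnonterm : ∀ i < L, cfRem ((n₂ : ℝ) / (n₁ : ℝ)) i ≠ 0)
    (r : ℝ) (hne : r ≠ (n₂ : ℝ) / (n₁ : ℝ))
    (hr : |r - (n₂ : ℝ) / (n₁ : ℝ)| <
      1 / ((2 * (K : ℝ) + 2) * (n₁ : ℝ) * ((n₁ : ℝ) - 1))) :
    ((∀ i ≤ L, cfB r i = cfB ((n₂ : ℝ) / (n₁ : ℝ)) i) ∧ K ≤ cfB r (L + 1)) ∨
    ((∀ i < L, cfB r i = cfB ((n₂ : ℝ) / (n₁ : ℝ)) i) ∧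
      cfB r L = cfB ((n₂ : ℝ) / (n₁ : ℝ)) L - 1 ∧ cfB r (L + 1) = 1 ∧
      K ≤ cfB r (L + 2)) := by
  induction L generalizing n₁ n₂ r with
  | zero =>
    exfalso
    have hN : (0 : ℝ) < n₁ := by exact_mod_cast (by omega : 0 < n₁)
    have hM : (0 : ℝ) < n₂ := by exact_mod_cast hn2
    have hx1 : (n₂ : ℝ) / n₁ < 1 := by rw [div_lt_one hN]; exact_mod_cast h21
    rw [cfRem, Int.fract_eq_self.2 ⟨by positivity, hx1⟩] at hterm
    exact (div_pos hM hN).ne' hterm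
  | succ L ih =>
    have hN : (2 : ℝ) ≤ n₁ := by exact_mod_cast (by omega : 2 ≤ n₁)
    have hM : (1 : ℝ) ≤ n₂ := by exact_mod_cast (by omega : 1 ≤ n₂)
    have hMN : (n₂ : ℝ) + 1 ≤ n₁ := by exact_mod_cast (by omega : n₂ + 1 ≤ n₁)
    have hK' : (1 : ℝ) ≤ K := by exact_mod_cast (by omega : 1 ≤ K)
    have hx0 : 0 < (n₂ : ℝ) / n₁ := div_pos (by linarith) (by linarith)
    have hx1 : (n₂ : ℝ) / n₁ < 1 := by rw [div_lt_one (by linarith)]; linarith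
    obtain ⟨-, hr0, hr1, -⟩ := cleared_bound hN hM hMN hK' hr
    rcases (by omega : n₂ = 1 ∨ 2 ≤ n₂) with rfl | hn2'
    · have hfx : ⌊(((1 : ℤ) : ℝ) / n₁)⁻¹⌋ = n₁ := by simp
      have hx : cfRem (((1 : ℤ) : ℝ) / n₁) 1 = 0 := by
        rw [cfRem_succ_eq_sub_int hx0 hx1 n₁]; simp [cfRem]
      obtain rfl : L = 0 := by
        by_contra hL
        exact hnonterm 1 (by omega) hx
      have hx0B := cfB_zero_of_mem hx0 hx1
      have hr0B := cfB_zero_of_mem hr0 hr1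
      have hx1B := cfB_one_of_mem hx0 hx1
      have hr1B := cfB_one_of_mem hr0 hr1
      rw [hfx] at hx1B
      rw [Int.cast_one] at hne hr hx1B hx0B ⊢
      rcases lt_or_gt_of_ne hne with hlt | hgt
      · left
        obtain ⟨hf, h2⟩ := base_below (by omega) (by omega) hlt hr
        refine ⟨fun i hi => ?_, h2⟩
        rcases (by omega : i = 0 ∨ i = 1) with rfl | rfl
        · rw [hx0B, hr0B]
        · rw [hx1B, hr1B, hf]
      · right
        obtain ⟨hf, h2, h3⟩ := base_above (by omega) (by omega) hgt hr
        refine ⟨fun i hi => ?_, ?_, h2, h3⟩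
        · obtain rfl : i = 0 := by omega
          rw [hx0B, hr0B]
        · rw [zero_add, hx1B, hr1B, hf]
    · have hg : Int.gcd (n₁ % n₂) n₂ = 1 := by
        rw [Int.gcd_comm] at hcop
        rw [Int.gcd_emod, hcop]
      have hR : 0 < n₁ % n₂ := by
        rcases (Int.emod_nonneg n₁ (by omega : n₂ ≠ 0)).eq_or_lt with h | h
        · rw [← h, Int.gcd_zero_left] at hg
          omega
        · exact h
      have hRM : n₁ % n₂ < n₂ := Int.emod_lt_of_pos _ hn2
      have hdiv : (n₁ : ℝ) = n₂ * ((n₁ / n₂ : ℤ) : ℝ) + ((n₁ % n₂ : ℤ) : ℝ) := by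
        exact_mod_cast (Int.mul_ediv_add_emod n₁ n₂).symm
      obtain ⟨hfr, hr'⟩ := gauss_step (by exact_mod_cast hn2') hMN hK' hdiv
        (by exact_mod_cast hR) (by exact_mod_cast hRM) hr
      set a := n₁ / n₂
      set n₃ := n₁ % n₂
      have hex : ((n₂ : ℝ) / n₁)⁻¹ - a = n₃ / n₂ := by
        rw [inv_div, hdiv]; field_simp; ring
      have hfx : ⌊((n₂ : ℝ) / n₁)⁻¹⌋ = a := by
        have h1 : (0 : ℝ) < (n₃ : ℝ) / n₂ :=
          div_pos (by exact_mod_cast hR) (by exact_mod_cast hn2)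
        have h2 : (n₃ : ℝ) / n₂ < 1 := by
          rw [div_lt_one (by exact_mod_cast hn2)]; exact_mod_cast hRM
        rw [Int.floor_eq_iff]
        constructor <;> linarith
      have hremx := cfRem_succ_eq_sub_int hx0 hx1 a
      have hBx := cfB_succ_succ_eq_sub_int hx0 hx1 a
      have hBr := cfB_succ_succ_eq_sub_int hr0 hr1 a
      rw [hex] at hremx hBx
      have hne' : r⁻¹ - a ≠ n₃ / n₂ := by
        intro h
        rw [← hex] at h
        exact hne (inv_injective (sub_left_injective h))
      -- `L = 0` is impossible because `n₃ ≠ 0`.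
      obtain ⟨l, rfl⟩ : ∃ l, L = l + 1 := by
        refine Nat.exists_eq_succ_of_ne_zero ?_
        rintro rfl
        have h1 : (0 : ℝ) < (n₃ : ℝ) / n₂ :=
          div_pos (by exact_mod_cast hR) (by exact_mod_cast hn2)
        have h2 : (n₃ : ℝ) / n₂ < 1 := by
          rw [div_lt_one (by exact_mod_cast hn2)]; exact_mod_cast hRM
        rw [hremx, cfRem, Int.fract_eq_self.2 ⟨h1.le, h2⟩] at hterm
        exact h1.ne' hterm
      have key := ih n₂ n₃ (by omega) hR hRM hg (by rw [← hremx]; exact hterm)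
        (fun i hi => by rw [← hremx]; exact hnonterm (i + 1) (by omega)) (r⁻¹ - a) hne' hr'
      have hlow : ∀ m : ℕ, (∀ i < m, cfB (r⁻¹ - a) i = cfB ((n₃ : ℝ) / n₂) i) →
          ∀ i < m + 1, cfB r i = cfB ((n₂ : ℝ) / n₁) i := by
        intro m h i hi
        match i with
        | 0 => rw [cfB_zero_of_mem hr0 hr1, cfB_zero_of_mem hx0 hx1]
        | 1 => rw [cfB_one_of_mem hr0 hr1, cfB_one_of_mem hx0 hx1, hfr, hfx]
        | i + 2 => rw [hBr, hBx]; exact h (i + 1) (by omega)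
      rcases key with ⟨h1, h2⟩ | ⟨h1, h2, h3, h4⟩
      · left
        refine ⟨fun i hi => hlow (l + 2) (fun j hj => h1 j (by omega)) i (by omega), ?_⟩
        rw [hBr]; exact h2
      · right
        refine ⟨hlow (l + 1) h1, ?_, ?_, ?_⟩
        · rw [hBr, hBx]; exact h2
        · rw [hBr]; exact h3
        · rw [hBr]; exact h4
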